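/- arXiv:2502.10484 — 2 statements merged into one kernel-verified Lean document; each statement's English description precedes it below -/
import Mathlib

section
/- Let f : ℝ² → ℝ be defined on a neighborhood of P = (x₀, y₀). Then the following are equivalent: (1) f is totally differentiable (Fréchet differentiable) at P; (2) for every p with 0 < p < 1 and every pair of sequences (Aₖ) = ((xₖ, yₖ)) and (Bₖ) = ((uₖ, vₖ)) of points in the plane with Aₖ ≠ P and Bₖ ≠ P for all k, with Aₖ → P and Bₖ → P, and with sin θₖ ≥ p for all k (where θₖ is the angle between the vectors Aₖ − P and Bₖ − P), the sequence of secant-plane coefficient row vectors [f(Aₖ) − f(P), f(Bₖ) − f(P)] · Mₖ⁻¹ converges, where Mₖ is the 2×2 matrix with columns Aₖ − P and Bₖ − P. Moreover, when these statements hold, the limit in (2) equals the total derivative (Jacobian row vector) J of f at P. -/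
/-!
Both directions rest on the identity `s ᵥ* M = [f A - f P, f B - f P]` characterising the secant
coefficients `s`, and on Lagrange's identity `|det M| = sin θ · |A - P| · |B - P|`.

If `f` has derivative `J` at `P`, Cramer's rule writes each coordinate of `s - J` as a combination
of the two remainders `f A - f P - J (A - P)` and `f B - f P - J (B - P)` divided by `det M`. Since
`|det M| ≥ p |A - P| |B - P|`, it is at most `1 / p` times the sum of the relative remainders, which
tends to `0` (`abs_secantCoeff_sub_le`).

Conversely, only right angles are needed: `B` is taken to be `A` rotated about `P` by a quarter
turn, so that the secant coefficients become a function `g` of `A` alone. Every sequence `A k → P`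
with `A k ≠ P` makes `g (A k)` converge, and interleaving two such sequences shows that the limit is
always the same, so `g` has a limit `L` at `P` (`exists_tendsto_of_forall_seq`). The
difference quotient estimate then comes from `f A - f P - L · (A - P) = (g A - L) · (A - P)`.
-/

open Matrix Filter InnerProductGeometry Real

/-- The 2×2 matrix with columns `u` and `v`. -/
noncomputable def colMatrix (u v : EuclideanSpace ℝ (Fin 2)) : Matrix (Fin 2) (Fin 2) ℝ :=
  !![u 0, v 0; u 1, v 1]

/-- The secant-plane coefficient row vector of `f` at `P` through `A` and `B`:
`[f(A) − f(P), f(B) − f(P)] · M⁻¹` where `M` has columns `A − P` and `B − P`. -/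
noncomputable def secantCoeff (f : EuclideanSpace ℝ (Fin 2) → ℝ)
    (P A B : EuclideanSpace ℝ (Fin 2)) : Fin 2 → ℝ :=
  ![f A - f P, f B - f P] ᵥ* (colMatrix (A - P) (B - P))⁻¹

/-- Interleaving argument: a map that sends every sequence tending to `l` to a convergent sequence
has a limit along `l`. -/
lemma exists_tendsto_of_forall_seq {α β : Type*} [TopologicalSpace β] [T2Space β]
    {l : Filter α} [l.IsCountablyGenerated] [l.NeBot] (g : α → β)
    (h : ∀ a : ℕ → α, Tendsto a atTop l → ∃ L, Tendsto (fun k => g (a k)) atTop (nhds L)) :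
    ∃ L, Tendsto g l (nhds L) := by
  obtain ⟨a, ha⟩ := exists_seq_tendsto l
  obtain ⟨L, hL⟩ := h a ha
  refine ⟨L, tendsto_of_seq_tendsto fun b hb => ?_⟩
  obtain ⟨L₂, hL₂⟩ := h b hb
  -- `c` runs through `a` at the even indices and through `b` at the odd ones.
  let c : ℕ → α := fun n => if Even n then a (n / 2) else b (n / 2)
  have hhalf : Tendsto (fun n : ℕ => n / 2) atTop atTop :=
    Nat.tendsto_div_const_atTop (by norm_num)
  have hc : Tendsto c atTop l := by
    refine tendsto_def.mpr fun s hs => ?_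
    filter_upwards [(ha.comp hhalf).eventually_mem hs, (hb.comp hhalf).eventually_mem hs]
      with n h₁ h₂
    by_cases hn : Even n
    · simpa [c, hn] using h₁
    · simpa [c, hn] using h₂
  obtain ⟨K, hK⟩ := h c hc
  have heven : Tendsto (fun k : ℕ => 2 * k) atTop atTop :=
    tendsto_atTop_mono (fun k => by simp only [id]; omega) tendsto_id
  have hodd : Tendsto (fun k : ℕ => 2 * k + 1) atTop atTop :=
    tendsto_atTop_mono (fun k => by simp only [id]; omega) tendsto_id
  have hKa : Tendsto (fun k => g (a k)) atTop (nhds K) := by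
    refine (hK.comp heven).congr fun k => ?_
    simp [c]
  have hKb : Tendsto (fun k => g (b k)) atTop (nhds K) := by
    refine (hK.comp hodd).congr fun k => ?_
    have h₂ : (2 * k + 1) / 2 = k := by omega
    simp [c, h₂]
  rw [tendsto_nhds_unique hL hKa]
  exact hKb

/-- Lagrange's identity in the plane. -/
lemma sin_angle_mul_eq_abs_det (u v : EuclideanSpace ℝ (Fin 2)) :
    Real.sin (angle u v) * (‖u‖ * ‖v‖) = |u 0 * v 1 - v 0 * u 1| := by
  rw [sin_angle_mul_norm_mul_norm, ← Real.sqrt_sq_eq_abs]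
  congr 1
  simp only [PiLp.inner_apply, Fin.sum_univ_two, RCLike.inner_apply, conj_trivial]
  ring

lemma det_colMatrix (u v : EuclideanSpace ℝ (Fin 2)) :
    (colMatrix u v).det = u 0 * v 1 - v 0 * u 1 := by
  simp [colMatrix, Matrix.det_fin_two]

/-- The secant plane passes through the points of the graph over `A` and `B`. -/
lemma secantCoeff_spec (f : EuclideanSpace ℝ (Fin 2) → ℝ) (P A B : EuclideanSpace ℝ (Fin 2))
    (h : (colMatrix (A - P) (B - P)).det ≠ 0) :
    secantCoeff f P A B 0 * (A - P) 0 + secantCoeff f P A B 1 * (A - P) 1 = f A - f P ∧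
    secantCoeff f P A B 0 * (B - P) 0 + secantCoeff f P A B 1 * (B - P) 1 = f B - f P := by
  have key : secantCoeff f P A B ᵥ* colMatrix (A - P) (B - P) = ![f A - f P, f B - f P] := by
    rw [secantCoeff, Matrix.vecMul_vecMul, Matrix.nonsing_inv_mul _ (isUnit_iff_ne_zero.mpr h),
      Matrix.vecMul_one]
  constructor
  · simpa [Matrix.vecMul, dotProduct, Fin.sum_univ_two, colMatrix] using congrFun key 0
  · simpa [Matrix.vecMul, dotProduct, Fin.sum_univ_two, colMatrix] using congrFun key 1

/-- The estimate behind Cramer's rule for a system with rows `u`, `v`, right-hand sides `a`, `b`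
and determinant `d`; `y`, `z` are the entries of `u`, `v` that appear in the numerator. -/
lemma abs_le_of_mul_det_eq {x a b y z d p m n : ℝ} (hp : 0 < p) (hm : 0 < m) (hn : 0 < n)
    (hx : x * d = a * z - b * y) (hd : p * (m * n) ≤ |d|) (hy : |y| ≤ m) (hz : |z| ≤ n) :
    |x| ≤ (m⁻¹ * |a| + n⁻¹ * |b|) / p := by
  have h₁ : |x| * |d| ≤ |a| * n + |b| * m := by
    rw [← abs_mul, hx]
    calc |a * z - b * y| ≤ |a * z| + |b * y| := abs_sub _ _
      _ = |a| * |z| + |b| * |y| := by rw [abs_mul, abs_mul]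
      _ ≤ |a| * n + |b| * m := by gcongr
  have h₂ : |x| * (p * (m * n)) ≤ |a| * n + |b| * m :=
    (mul_le_mul_of_nonneg_left hd (abs_nonneg x)).trans h₁
  have h₃ : (m⁻¹ * |a| + n⁻¹ * |b|) / p = (|a| * n + |b| * m) / (p * (m * n)) := by
    field_simp
  rw [h₃, le_div_iff₀ (by positivity)]
  exact h₂

/-- Every linear functional `J` approximates the secant coefficients up to `1 / p` times the
relative remainders of `J` at the two secant points. -/
lemma abs_secantCoeff_sub_le (f : EuclideanSpace ℝ (Fin 2) → ℝ)
    (P A B : EuclideanSpace ℝ (Fin 2)) (J : EuclideanSpace ℝ (Fin 2) →L[ℝ] ℝ) {p : ℝ}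
    (hp : 0 < p) (hA : A ≠ P) (hB : B ≠ P) (hs : p ≤ Real.sin (angle (A - P) (B - P)))
    (i : Fin 2) :
    |secantCoeff f P A B i - J (EuclideanSpace.single i 1)| ≤
      (‖A - P‖⁻¹ * |f A - f P - J (A - P)| + ‖B - P‖⁻¹ * |f B - f P - J (B - P)|) / p := by
  have hm : 0 < ‖A - P‖ := norm_pos_iff.mpr (sub_ne_zero.mpr hA)
  have hn : 0 < ‖B - P‖ := norm_pos_iff.mpr (sub_ne_zero.mpr hB)
  have hd : p * (‖A - P‖ * ‖B - P‖) ≤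
      |(A - P) 0 * (B - P) 1 - (B - P) 0 * (A - P) 1| := by
    rw [← sin_angle_mul_eq_abs_det]
    gcongr
  have hdet : (colMatrix (A - P) (B - P)).det ≠ 0 := by
    rw [det_colMatrix, ← abs_pos]
    exact lt_of_lt_of_le (by positivity) hd
  obtain ⟨eA, eB⟩ := secantCoeff_spec f P A B hdet
  have hJ : ∀ w : EuclideanSpace ℝ (Fin 2),
      J w = J (EuclideanSpace.single 0 1) * w 0 + J (EuclideanSpace.single 1 1) * w 1 := by
    intro w
    have hw : w = w 0 • EuclideanSpace.single 0 (1 : ℝ) + w 1 • EuclideanSpace.single 1 1 := by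
      ext j
      fin_cases j <;> simp
    conv_lhs => rw [hw]
    simp only [map_add, map_smul, smul_eq_mul]
    ring
  have bA : ∀ j, |(A - P) j| ≤ ‖A - P‖ := fun j => PiLp.norm_apply_le (A - P) j
  have bB : ∀ j, |(B - P) j| ≤ ‖B - P‖ := fun j => PiLp.norm_apply_le (B - P) j
  rw [← eA, ← eB, hJ (A - P), hJ (B - P)]
  fin_cases i
  · refine abs_le_of_mul_det_eq hp hm hn ?_ hd (bA 1) (bB 1)
    simp only [Fin.zero_eta]
    ring
  · -- The numerator is `b * u₀ - a * v₀`, whence the sign changes.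
    refine abs_le_of_mul_det_eq hp hm hn ?_ hd
      (y := -(A - P) 0) (z := -(B - P) 0) (by rw [abs_neg]; exact bA 0) (by rw [abs_neg]; exact bB 0)
    simp only [Fin.mk_one]
    ring

lemma tendsto_secantCoeff (f : EuclideanSpace ℝ (Fin 2) → ℝ) (P : EuclideanSpace ℝ (Fin 2))
    (hf : DifferentiableAt ℝ f P) {p : ℝ} (hp : 0 < p) (A B : ℕ → EuclideanSpace ℝ (Fin 2))
    (hA : ∀ k, A k ≠ P) (hB : ∀ k, B k ≠ P)
    (tA : Tendsto A atTop (nhds P)) (tB : Tendsto B atTop (nhds P))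
    (hs : ∀ k, p ≤ Real.sin (angle (A k - P) (B k - P))) :
    Tendsto (fun k => secantCoeff f P (A k) (B k)) atTop
      (nhds ![fderiv ℝ f P (EuclideanSpace.single 0 1),
              fderiv ℝ f P (EuclideanSpace.single 1 1)]) := by
  have hr := hasFDerivAt_iff_tendsto.mp hf.hasFDerivAt
  have hlim := ((hr.comp tA).add (hr.comp tB)).div_const p
  rw [add_zero, zero_div] at hlim
  have hcoord : ∀ i, Tendsto (fun k => secantCoeff f P (A k) (B k) i) atTop
      (nhds (fderiv ℝ f P (EuclideanSpace.single i 1))) := by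
    intro i
    rw [tendsto_iff_norm_sub_tendsto_zero]
    exact squeeze_zero (fun _ => norm_nonneg _)
      (fun k => abs_secantCoeff_sub_le f P (A k) (B k) _ hp (hA k) (hB k) (hs k) i) hlim
  rw [tendsto_pi_nhds]
  intro i
  fin_cases i
  · exact hcoord 0
  · exact hcoord 1

/-- Rotation of the plane by a quarter turn. -/
noncomputable def quarterTurn (u : EuclideanSpace ℝ (Fin 2)) : EuclideanSpace ℝ (Fin 2) :=
  !₂[-u 1, u 0]

lemma norm_quarterTurn (u : EuclideanSpace ℝ (Fin 2)) : ‖quarterTurn u‖ = ‖u‖ := by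
  simp [EuclideanSpace.norm_eq, quarterTurn, Fin.sum_univ_two, add_comm]

lemma angle_quarterTurn (u : EuclideanSpace ℝ (Fin 2)) : angle u (quarterTurn u) = π / 2 := by
  rw [← inner_eq_zero_iff_angle_eq_pi_div_two]
  simp only [PiLp.inner_apply, Fin.sum_univ_two, RCLike.inner_apply, conj_trivial, quarterTurn]
  simp
  ring

/-- Convergence of the secant coefficients along right angles already forces differentiability. -/
lemma differentiableAt_of_quarterTurn (f : EuclideanSpace ℝ (Fin 2) → ℝ)
    (P : EuclideanSpace ℝ (Fin 2))
    (h : ∀ A : ℕ → EuclideanSpace ℝ (Fin 2), (∀ k, A k ≠ P) → Tendsto A atTop (nhds P) →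
      ∃ L : Fin 2 → ℝ,
        Tendsto (fun k => secantCoeff f P (A k) (P + quarterTurn (A k - P))) atTop (nhds L)) :
    DifferentiableAt ℝ f P := by
  obtain ⟨L, hL⟩ := exists_tendsto_of_forall_seq (l := nhdsWithin P {P}ᶜ)
    (fun A => secantCoeff f P A (P + quarterTurn (A - P))) (by
      intro a ha
      obtain ⟨ha₁, ha₂⟩ := tendsto_nhdsWithin_iff.mp ha
      obtain ⟨N, hN⟩ := eventually_atTop.mp ha₂
      obtain ⟨L, hL⟩ := h (fun k => a (k + N)) (fun k => hN _ (Nat.le_add_left N k))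
        ((tendsto_add_atTop_iff_nat N).mpr ha₁)
      exact ⟨L, (tendsto_add_atTop_iff_nat N).mp hL⟩)
  let J : EuclideanSpace ℝ (Fin 2) →L[ℝ] ℝ :=
    L 0 • EuclideanSpace.proj 0 + L 1 • EuclideanSpace.proj 1
  have hJ : ∀ w, J w = L 0 * w 0 + L 1 * w 1 := fun w => by simp [J]
  refine HasFDerivAt.differentiableAt (f' := J) ?_
  rw [hasFDerivAt_iff_isLittleO, Asymptotics.isLittleO_iff]
  intro c hc
  have hev : ∀ i, ∀ᶠ A in nhdsWithin P {P}ᶜ,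
      |secantCoeff f P A (P + quarterTurn (A - P)) i - L i| < c / 2 := fun i =>
    Metric.tendsto_nhds.mp (tendsto_pi_nhds.mp hL i) (c / 2) (half_pos hc)
  have h₀ := eventually_nhdsWithin_iff.mp (hev 0)
  have h₁ := eventually_nhdsWithin_iff.mp (hev 1)
  filter_upwards [h₀, h₁] with A hA₀ hA₁
  by_cases hA : A = P
  · simp [hA]
  specialize hA₀ hA
  specialize hA₁ hA
  have hpos : 0 < ‖A - P‖ := norm_pos_iff.mpr (sub_ne_zero.mpr hA)
  have hdet : (colMatrix (A - P) (P + quarterTurn (A - P) - P)).det ≠ 0 := by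
    rw [add_sub_cancel_left, det_colMatrix, ← abs_pos, ← sin_angle_mul_eq_abs_det,
      angle_quarterTurn, norm_quarterTurn, Real.sin_pi_div_two]
    positivity
  have e := (secantCoeff_spec f P A _ hdet).1
  have b₀ : |(A - P) 0| ≤ ‖A - P‖ := PiLp.norm_apply_le (A - P) 0
  have b₁ : |(A - P) 1| ≤ ‖A - P‖ := PiLp.norm_apply_le (A - P) 1
  rw [hJ, ← e, Real.norm_eq_abs]
  set s := secantCoeff f P A (P + quarterTurn (A - P))
  calc |s 0 * (A - P) 0 + s 1 * (A - P) 1 - (L 0 * (A - P) 0 + L 1 * (A - P) 1)|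
      = |(s 0 - L 0) * (A - P) 0 + (s 1 - L 1) * (A - P) 1| := by congr 1; ring
    _ ≤ |s 0 - L 0| * |(A - P) 0| + |s 1 - L 1| * |(A - P) 1| := by
        rw [← abs_mul, ← abs_mul]
        exact abs_add_le _ _
    _ ≤ c / 2 * ‖A - P‖ + c / 2 * ‖A - P‖ := by gcongr
    _ = c * ‖A - P‖ := by ring

/-- Theorem (main): `f` is totally (Fréchet) differentiable at `P` if and only if for
every `0 < p < 1` and all sequences `Aₖ → P`, `Bₖ → P` with `Aₖ, Bₖ ≠ P` and
`sin θₖ ≥ p` (θₖ the angle between `Aₖ − P` and `Bₖ − P`), the secant-plane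
coefficient vectors converge; moreover in that case the limit is the total
derivative (Jacobian row vector) of `f` at `P`. -/
theorem tangent_plane_eq_limit_of_secant_plane
    (f : EuclideanSpace ℝ (Fin 2) → ℝ) (P : EuclideanSpace ℝ (Fin 2)) :
    (DifferentiableAt ℝ f P ↔
      ∀ p : ℝ, 0 < p → p < 1 →
        ∀ A B : ℕ → EuclideanSpace ℝ (Fin 2),
          (∀ k, A k ≠ P) → (∀ k, B k ≠ P) →
          Tendsto A atTop (nhds P) → Tendsto B atTop (nhds P) →
          (∀ k, p ≤ Real.sin (angle (A k - P) (B k - P))) →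
          ∃ L : Fin 2 → ℝ,
            Tendsto (fun k => secantCoeff f P (A k) (B k)) atTop (nhds L)) ∧
    (DifferentiableAt ℝ f P →
      ∀ p : ℝ, 0 < p → p < 1 →
        ∀ A B : ℕ → EuclideanSpace ℝ (Fin 2),
          (∀ k, A k ≠ P) → (∀ k, B k ≠ P) →
          Tendsto A atTop (nhds P) → Tendsto B atTop (nhds P) →
          (∀ k, p ≤ Real.sin (angle (A k - P) (B k - P))) →
          Tendsto (fun k => secantCoeff f P (A k) (B k)) atTop
            (nhds ![fderiv ℝ f P (EuclideanSpace.single 0 1),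
                    fderiv ℝ f P (EuclideanSpace.single 1 1)])) := by
  refine ⟨⟨fun hf p hp _ A B hA hB tA tB hs =>
      ⟨_, tendsto_secantCoeff f P hf hp A B hA hB tA tB hs⟩, fun h => ?_⟩,
    fun hf p hp _ A B hA hB tA tB hs => tendsto_secantCoeff f P hf hp A B hA hB tA tB hs⟩
  refine differentiableAt_of_quarterTurn f P fun A hA tA => ?_
  refine h (1 / 2) (by norm_num) (by norm_num) A _ hA (fun k hk => ?_) tA ?_ fun k => ?_
  · have h₀ : ‖A k - P‖ = 0 := by
      rw [← norm_quarterTurn, add_eq_left.mp hk, norm_zero]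
    exact hA k (sub_eq_zero.mp (norm_eq_zero.mp h₀))
  · rw [tendsto_iff_norm_sub_tendsto_zero]
    simpa only [add_sub_cancel_left, norm_quarterTurn] using
      tendsto_iff_norm_sub_tendsto_zero.mp tA
  · rw [add_sub_cancel_left, angle_quarterTurn, Real.sin_pi_div_two]
    norm_num
end

section
/- Let f : ℝ² → ℝ be defined on a neighborhood of P = (x₀, y₀). Suppose that for every p with 0 < p < 1 and every pair of sequences (Aₖ), (Bₖ) of points with Aₖ ≠ P, Bₖ ≠ P, Aₖ → P, Bₖ → P, and sin θₖ ≥ p for all k (θₖ being the angle between Aₖ − P and Bₖ − P), the sequence of secant-plane coefficient row vectors [f(Aₖ) − f(P), f(Bₖ) − f(P)] · Mₖ⁻¹ converges (Mₖ being the 2×2 matrix with columns Aₖ − P and Bₖ − P). Then f is totally differentiable at P, and its total derivative equals the common value of these limits. -/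
/-!
Interleaving two admissible pairs of sequences gives an admissible pair (for the smaller of the two
angle bounds), so all the limits in the hypothesis agree with one vector `L`
(`exists_common_limit`). Pairing a point `A ≠ P` with the point `B` for which `B - P` is
`A - P` turned by a right angle makes `sin θ = 1`, so the coefficients `c(A)` of this pair tend to
`L` as `A → P`. Since the secant plane passes through `A`, `f A - f P = c(A) · (A - P)`, whence
`f A - f P - L · (A - P) = (c(A) - L) · (A - P) = o(‖A - P‖)`, i.e. `L` is the total derivative.
-/

open Matrix Filter InnerProductGeometry Real

/-- The pair of sequences `A`, `B` is admissible at `P` with angle bound `p`. -/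
def Admissible (P : EuclideanSpace ℝ (Fin 2)) (p : ℝ)
    (A B : ℕ → EuclideanSpace ℝ (Fin 2)) : Prop :=
  (∀ k, A k ≠ P) ∧ (∀ k, B k ≠ P) ∧ Tendsto A atTop (nhds P) ∧ Tendsto B atTop (nhds P) ∧
    ∀ k, p ≤ Real.sin (angle (A k - P) (B k - P))

lemma quarterTurn_ne_zero {u : EuclideanSpace ℝ (Fin 2)} (hu : u ≠ 0) : quarterTurn u ≠ 0 := by
  intro h
  apply hu
  have h0 := congrArg (fun v : EuclideanSpace ℝ (Fin 2) => v 0) h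
  have h1 := congrArg (fun v : EuclideanSpace ℝ (Fin 2) => v 1) h
  simp [quarterTurn] at h0 h1
  ext i
  fin_cases i <;> simp [h0, h1]

lemma sin_angle_quarterTurn (u : EuclideanSpace ℝ (Fin 2)) :
    Real.sin (angle u (quarterTurn u)) = 1 := by
  have h : inner ℝ u (quarterTurn u) = 0 := by
    simp [quarterTurn, PiLp.inner_apply, Fin.sum_univ_two]
    ring
  rw [(inner_eq_zero_iff_angle_eq_pi_div_two _ _).1 h, Real.sin_pi_div_two]

lemma continuous_quarterTurn : Continuous quarterTurn := by
  unfold quarterTurn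
  refine (PiLp.continuous_toLp 2 _).comp (continuous_pi fun i => ?_)
  fin_cases i <;> simp <;> fun_prop

lemma admissible_quarterTurn {P : EuclideanSpace ℝ (Fin 2)} {p : ℝ} (hp : p < 1)
    {A : ℕ → EuclideanSpace ℝ (Fin 2)} (hA : ∀ k, A k ≠ P) (hAt : Tendsto A atTop (nhds P)) :
    Admissible P p A (fun k => P + quarterTurn (A k - P)) := by
  refine ⟨hA, fun k hk => ?_, hAt, ?_, fun k => ?_⟩
  · exact quarterTurn_ne_zero (sub_ne_zero.2 (hA k)) (by simpa using hk)
  · have hc : Continuous fun x => P + quarterTurn (x - P) :=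
      continuous_const.add (continuous_quarterTurn.comp (continuous_id.sub continuous_const))
    have h0 : P + quarterTurn (P - P) = P := by
      ext i
      fin_cases i <;> simp [quarterTurn]
    have := (hc.tendsto P).comp hAt
    rwa [h0] at this
  · simp only [add_sub_cancel_left, sin_angle_quarterTurn]
    exact hp.le

/-- The secant plane through `A` and `P + quarterTurn (A - P)` interpolates `f` at `A`. -/
lemma secantCoeff_quarterTurn (f : EuclideanSpace ℝ (Fin 2) → ℝ)
    {P A : EuclideanSpace ℝ (Fin 2)} (hA : A ≠ P) :
    secantCoeff f P A (P + quarterTurn (A - P)) 0 * (A - P) 0 +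
      secantCoeff f P A (P + quarterTurn (A - P)) 1 * (A - P) 1 = f A - f P := by
  have hu : A - P ≠ 0 := sub_ne_zero.2 hA
  unfold secantCoeff
  rw [add_sub_cancel_left]
  generalize A - P = u at hu ⊢
  have hdet : IsUnit (colMatrix u (quarterTurn u)).det := by
    rw [isUnit_iff_ne_zero]
    intro h
    apply hu
    simp [colMatrix, quarterTurn, Matrix.det_fin_two] at h
    have h0 : u 0 = 0 := by nlinarith [sq_nonneg (u 0), sq_nonneg (u 1)]
    have h1 : u 1 = 0 := by nlinarith [sq_nonneg (u 0), sq_nonneg (u 1)]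
    ext i
    fin_cases i <;> simp [h0, h1]
  generalize hw : ![f A - f P, f (P + quarterTurn u) - f P] = w
  have key : (w ᵥ* (colMatrix u (quarterTurn u))⁻¹) ᵥ* colMatrix u (quarterTurn u) = w := by
    rw [Matrix.vecMul_vecMul, Matrix.nonsing_inv_mul _ hdet, Matrix.vecMul_one]
  have key0 := congrFun key 0
  generalize w ᵥ* (colMatrix u (quarterTurn u))⁻¹ = c at key0 ⊢
  rw [← hw] at key0
  simpa [Matrix.vecMul, dotProduct, Fin.sum_univ_two, colMatrix] using key0

/-- The sequence `a 0, b 0, a 1, b 1, …`. -/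
def interleave {α : Type*} (a b : ℕ → α) (k : ℕ) : α :=
  if k % 2 = 0 then a (k / 2) else b (k / 2)

lemma interleave_even {α : Type*} (a b : ℕ → α) (k : ℕ) : interleave a b (2 * k) = a k := by
  simp [interleave]

lemma interleave_odd {α : Type*} (a b : ℕ → α) (k : ℕ) : interleave a b (2 * k + 1) = b k := by
  have h1 : (2 * k + 1) % 2 = 1 := by omega
  have h2 : (2 * k + 1) / 2 = k := by omega
  simp [interleave, h1, h2]

lemma tendsto_interleave {α : Type*} {l : Filter α} {a b : ℕ → α}
    (ha : Tendsto a atTop l) (hb : Tendsto b atTop l) : Tendsto (interleave a b) atTop l := by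
  have hd : Tendsto (fun k : ℕ => k / 2) atTop atTop :=
    Nat.tendsto_div_const_atTop two_ne_zero
  exact Tendsto.if' (ha.comp hd) (hb.comp hd)

lemma Admissible.interleave {P : EuclideanSpace ℝ (Fin 2)} {p q : ℝ}
    {A B A' B' : ℕ → EuclideanSpace ℝ (Fin 2)} (h : Admissible P p A B)
    (h' : Admissible P q A' B') :
    Admissible P (min p q) (interleave A A') (interleave B B') := by
  obtain ⟨h1, h2, h3, h4, h5⟩ := h
  obtain ⟨h1', h2', h3', h4', h5'⟩ := h'
  refine ⟨fun k => ?_, fun k => ?_, tendsto_interleave h3 h3', tendsto_interleave h4 h4',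
    fun k => ?_⟩
  · unfold _root_.interleave
    split_ifs
    exacts [h1 _, h1' _]
  · unfold _root_.interleave
    split_ifs
    exacts [h2 _, h2' _]
  · unfold _root_.interleave
    split_ifs
    exacts [(min_le_left _ _).trans (h5 _), (min_le_right _ _).trans (h5' _)]

lemma exists_common_limit {f : EuclideanSpace ℝ (Fin 2) → ℝ} {P : EuclideanSpace ℝ (Fin 2)}
    (h : ∀ p : ℝ, 0 < p → p < 1 → ∀ A B, Admissible P p A B →
      ∃ L : Fin 2 → ℝ, Tendsto (fun k => secantCoeff f P (A k) (B k)) atTop (nhds L)) :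
    ∃ L : Fin 2 → ℝ, ∀ p : ℝ, 0 < p → p < 1 → ∀ A B, Admissible P p A B →
      Tendsto (fun k => secantCoeff f P (A k) (B k)) atTop (nhds L) := by
  -- Any admissible pair serves as the reference defining `L`; here `A k = P + e₀ / (k + 1)`.
  obtain ⟨A₀, B₀, h₀⟩ : ∃ A₀ B₀, Admissible P (1 / 2) A₀ B₀ := by
    refine ⟨fun k : ℕ => P + (1 / ((k : ℝ) + 1)) • EuclideanSpace.single 0 1, _,
      admissible_quarterTurn (by norm_num) (fun k hk => ?_) ?_⟩
    · have hk' : (k : ℝ) + 1 ≠ 0 := by positivity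
      simp [hk'] at hk
    · simpa using (tendsto_one_div_add_atTop_nhds_zero_nat (𝕜 := ℝ)).smul_const
        (EuclideanSpace.single (0 : Fin 2) (1 : ℝ)) |>.const_add P
  obtain ⟨L, hL⟩ := h _ (by norm_num) (by norm_num) _ _ h₀
  refine ⟨L, fun p hp hp1 A B hAB => ?_⟩
  obtain ⟨M, hM⟩ := h _ (lt_min hp (by norm_num)) (min_lt_of_left_lt hp1) _ _ (hAB.interleave h₀)
  have he : Tendsto (fun k : ℕ => 2 * k) atTop atTop :=
    tendsto_atTop_mono (fun k => by simp only [id]; omega) tendsto_id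
  have ho : Tendsto (fun k : ℕ => 2 * k + 1) atTop atTop :=
    tendsto_atTop_mono (fun k => by simp only [id]; omega) tendsto_id
  have hMe := hM.comp he
  have hMo := hM.comp ho
  simp only [Function.comp_def, interleave_even, interleave_odd] at hMe hMo
  rwa [tendsto_nhds_unique hL hMo]

lemma hasFDerivAt_of_common_limit {f : EuclideanSpace ℝ (Fin 2) → ℝ}
    {P : EuclideanSpace ℝ (Fin 2)} {L : Fin 2 → ℝ}
    (hL : ∀ p : ℝ, 0 < p → p < 1 → ∀ A B, Admissible P p A B →
      Tendsto (fun k => secantCoeff f P (A k) (B k)) atTop (nhds L)) :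
    HasFDerivAt f (L 0 • (EuclideanSpace.proj 0 : EuclideanSpace ℝ (Fin 2) →L[ℝ] ℝ) +
      L 1 • (EuclideanSpace.proj 1 : EuclideanSpace ℝ (Fin 2) →L[ℝ] ℝ)) P := by
  have ht : Tendsto (fun A => secantCoeff f P A (P + quarterTurn (A - P)))
      (nhdsWithin P {P}ᶜ) (nhds L) := by
    refine tendsto_of_seq_tendsto fun A hA => ?_
    obtain ⟨hA1, hA2⟩ := tendsto_nhdsWithin_iff.1 hA
    obtain ⟨N, hN⟩ := eventually_atTop.1 hA2
    refine (tendsto_add_atTop_iff_nat N).1 ?_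
    exact hL (1 / 2) (by norm_num) (by norm_num) (fun k => A (k + N)) _
      (admissible_quarterTurn (by norm_num) (fun k => hN _ (by omega))
        ((tendsto_add_atTop_iff_nat N).2 hA1))
  rw [hasFDerivAt_iff_isLittleO, Asymptotics.isLittleO_iff]
  intro c hc
  have hev := Metric.tendsto_nhds.1 ht (c / 2) (by positivity)
  filter_upwards [eventually_nhdsWithin_iff.1 hev] with A hA
  by_cases hAP : A = P
  · simp [hAP]
  have hd := hA hAP
  have hf := secantCoeff_quarterTurn f hAP
  generalize secantCoeff f P A (P + quarterTurn (A - P)) = s at hd hf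
  have h0 : |s 0 - L 0| ≤ c / 2 := (dist_le_pi_dist s L 0).trans hd.le
  have h1 : |s 1 - L 1| ≤ c / 2 := (dist_le_pi_dist s L 1).trans hd.le
  have hu0 : |(A - P) 0| ≤ ‖A - P‖ := PiLp.norm_apply_le (A - P) 0
  have hu1 : |(A - P) 1| ≤ ‖A - P‖ := PiLp.norm_apply_le (A - P) 1
  rw [← hf]
  generalize A - P = u at hu0 hu1 ⊢
  calc ‖s 0 * u 0 + s 1 * u 1 - (L 0 • (EuclideanSpace.proj 0 : EuclideanSpace ℝ (Fin 2) →L[ℝ] ℝ) +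
        L 1 • (EuclideanSpace.proj 1 : EuclideanSpace ℝ (Fin 2) →L[ℝ] ℝ)) u‖
      = |(s 0 - L 0) * u 0 + (s 1 - L 1) * u 1| := by
        rw [Real.norm_eq_abs]
        congr 1
        simp
        ring
    _ ≤ |s 0 - L 0| * |u 0| + |s 1 - L 1| * |u 1| := by
        rw [← abs_mul, ← abs_mul]
        exact abs_add_le _ _
    _ ≤ c / 2 * ‖u‖ + c / 2 * ‖u‖ := by gcongr
    _ = c * ‖u‖ := by ring

/-- If for every `0 < p < 1` and all admissible pairs of sequences (`Aₖ, Bₖ ≠ P`,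
`Aₖ → P`, `Bₖ → P`, `sin θₖ ≥ p`) the secant-plane coefficient vectors converge,
then `f` is totally differentiable at `P` and its total derivative (Jacobian row
vector) is the common value of these limits. -/
theorem differentiable_of_secant_coeff_tendsto
    (f : EuclideanSpace ℝ (Fin 2) → ℝ) (P : EuclideanSpace ℝ (Fin 2))
    (h : ∀ p : ℝ, 0 < p → p < 1 →
      ∀ A B : ℕ → EuclideanSpace ℝ (Fin 2),
        (∀ k, A k ≠ P) → (∀ k, B k ≠ P) →
        Tendsto A atTop (nhds P) → Tendsto B atTop (nhds P) →
        (∀ k, p ≤ Real.sin (angle (A k - P) (B k - P))) →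
        ∃ L : Fin 2 → ℝ,
          Tendsto (fun k => secantCoeff f P (A k) (B k)) atTop (nhds L)) :
    DifferentiableAt ℝ f P ∧
    (∀ p : ℝ, 0 < p → p < 1 →
      ∀ A B : ℕ → EuclideanSpace ℝ (Fin 2),
        (∀ k, A k ≠ P) → (∀ k, B k ≠ P) →
        Tendsto A atTop (nhds P) → Tendsto B atTop (nhds P) →
        (∀ k, p ≤ Real.sin (angle (A k - P) (B k - P))) →
        Tendsto (fun k => secantCoeff f P (A k) (B k)) atTop
          (nhds ![fderiv ℝ f P (EuclideanSpace.single 0 1),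
                  fderiv ℝ f P (EuclideanSpace.single 1 1)])) := by
  obtain ⟨L, hL⟩ := exists_common_limit (f := f) (P := P)
    fun p hp hp1 A B ⟨h1, h2, h3, h4, h5⟩ => h p hp hp1 A B h1 h2 h3 h4 h5
  have hD := hasFDerivAt_of_common_limit hL
  refine ⟨hD.differentiableAt, fun p hp hp1 A B h1 h2 h3 h4 h5 => ?_⟩
  convert hL p hp hp1 A B ⟨h1, h2, h3, h4, h5⟩ using 2
  rw [hD.fderiv]
  ext i
  fin_cases i <;> simp
end
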